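/- arXiv:1709.10337 — 2 statements merged into one kernel-verified Lean document; each statement's English description precedes it below -/
import Mathlib

section
/- Let gamma = (3 + sqrt 3)/6 and define R(x) = (1 + (1 - 2*gamma)*x + (gamma^2 - 2*gamma + 1/2)*x^2) / (1 - gamma*x)^2 for real x. Then R(x) tends to 1 - sqrt 3 as x → -∞, and 1 - sqrt 3 ≠ 0. -/
open Filter

/-!
At `-∞` a rational function tends to the quotient of its leading coefficients, here
`(γ ^ 2 - 2 * γ + 1 / 2) / γ ^ 2`. The value `γ = (3 + √3) / 6` is a root of the third-order
condition `γ ^ 2 - γ + 1 / 6 = 0`, modulo which this quotient reduces to `4 - 6 * γ = 1 - √3`.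
-/

section RationalLimits

open Polynomial

variable {𝕜 : Type*} [NormedField 𝕜] [LinearOrder 𝕜] [IsStrictOrderedRing 𝕜] [OrderTopology 𝕜]

lemma tendsto_eval_div_eval_atBot_of_degree_le {P Q : 𝕜[X]}
    (hdeg : P.degree ≤ Q.degree) :
    Tendsto (fun x => P.eval x / Q.eval x) atBot
      (nhds (P.coeff Q.natDegree / Q.leadingCoeff)) := by
  rcases hdeg.lt_or_eq with hlt | heq
  · have hcoeff : P.coeff Q.natDegree = 0 :=
      coeff_eq_zero_of_degree_lt (hlt.trans_le degree_le_natDegree)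
    simpa only [hcoeff, zero_div] using div_tendsto_atBot_zero_of_degree_lt P Q hlt
  · have hcoeff : P.coeff Q.natDegree = P.leadingCoeff := by
      rw [← natDegree_eq_of_degree_eq heq, coeff_natDegree]
    simpa only [hcoeff] using div_tendsto_atBot_leadingCoeff_div_of_degree_eq P Q heq

lemma tendsto_quadratic_div_quadratic_atBot (a b c : 𝕜) {a' : 𝕜} (b' c' : 𝕜)
    (ha' : a' ≠ 0) :
    Tendsto (fun x => (a * x ^ 2 + b * x + c) / (a' * x ^ 2 + b' * x + c')) atBot
      (nhds (a / a')) := by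
  have hdeg : (C a * X ^ 2 + C b * X + C c).degree ≤ (C a' * X ^ 2 + C b' * X + C c').degree :=
    degree_quadratic_le.trans (degree_quadratic ha').ge
  have hlim := tendsto_eval_div_eval_atBot_of_degree_le hdeg
  rw [natDegree_quadratic ha', leadingCoeff_quadratic ha'] at hlim
  simpa [coeff_X, coeff_C] using hlim

end RationalLimits

/-- The stability function of a two-stage singly diagonally implicit Runge–Kutta method of order
at least two with diagonal coefficient `γ`; SDIRK23 is the case `γ = (3 + √3) / 6`. At the pole
`γ * z = 1` it takes the junk value `0`. -/
def sdirkStabilityFunction {K : Type*} [Field K] (γ z : K) : K :=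
  (1 + (1 - 2 * γ) * z + (γ ^ 2 - 2 * γ + 1 / 2) * z ^ 2) / (1 - γ * z) ^ 2

section SDIRK

variable {𝕜 : Type*} [NormedField 𝕜] [LinearOrder 𝕜] [IsStrictOrderedRing 𝕜] [OrderTopology 𝕜]
  {γ : 𝕜}

lemma tendsto_sdirkStabilityFunction_atBot (hγ : γ ≠ 0) :
    Tendsto (sdirkStabilityFunction γ) atBot (nhds ((γ ^ 2 - 2 * γ + 1 / 2) / γ ^ 2)) := by
  refine (tendsto_quadratic_div_quadratic_atBot (γ ^ 2 - 2 * γ + 1 / 2) (1 - 2 * γ) 1 (-2 * γ) 1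
    (pow_ne_zero 2 hγ)).congr fun x => ?_
  unfold sdirkStabilityFunction
  congr 1 <;> ring

-- `hγ` says that the `z ^ 3` coefficient of the stability function agrees with that of `exp z`.
lemma tendsto_sdirkStabilityFunction_atBot_of_order_three (hγ : γ ^ 2 - γ + 1 / 6 = 0) :
    Tendsto (sdirkStabilityFunction γ) atBot (nhds (4 - 6 * γ)) := by
  have hγ0 : γ ≠ 0 := by
    rintro rfl
    norm_num at hγ
  have hlimit : (γ ^ 2 - 2 * γ + 1 / 2) / γ ^ 2 = 4 - 6 * γ := by
    rw [div_eq_iff (pow_ne_zero 2 hγ0)]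
    linear_combination (6 * γ + 3) * hγ
  exact hlimit ▸ tendsto_sdirkStabilityFunction_atBot hγ0

end SDIRK

lemma sdirk23_order_three_condition :
    ((3 + Real.sqrt 3) / 6) ^ 2 - (3 + Real.sqrt 3) / 6 + 1 / 6 = 0 := by
  have hsq : Real.sqrt 3 ^ 2 = 3 := Real.sq_sqrt (by norm_num)
  linear_combination hsq / 36

/-- The SDIRK23 stability function (restricted to the real axis), with `γ = (3 + √3)/6`,
tends to `1 - √3 ≠ 0` as `x → -∞`, so the SDIRK23 method is not L-stable. -/
theorem sdirk23_not_L_stable :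
    Tendsto
      (fun x : ℝ =>
        (1 + (1 - 2 * ((3 + Real.sqrt 3) / 6)) * x +
            (((3 + Real.sqrt 3) / 6) ^ 2 - 2 * ((3 + Real.sqrt 3) / 6) + 1 / 2) * x ^ 2) /
          (1 - ((3 + Real.sqrt 3) / 6) * x) ^ 2)
      atBot (nhds (1 - Real.sqrt 3)) ∧
    1 - Real.sqrt 3 ≠ 0 := by
  have hlimit : 4 - 6 * ((3 + Real.sqrt 3) / 6) = 1 - Real.sqrt 3 := by ring
  have hsqrt : 1 < Real.sqrt 3 := Real.lt_sqrt_of_sq_lt (by norm_num)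
  exact ⟨hlimit ▸ tendsto_sdirkStabilityFunction_atBot_of_order_three
    sdirk23_order_three_condition, (sub_neg.mpr hsqrt).ne⟩
end

section
/- Let s be a positive integer, A an invertible s×s real matrix, and b : Fin s → ℝ. For real x define, whenever the matrix (1 - x•A) is invertible, R(x) = 1 + x * (b ⬝ᵥ ((1 - x•A)⁻¹.mulVec (fun _ => 1))). Then (1 - x•A) is invertible for all x of sufficiently large absolute value, and R(x) tends to 1 - b ⬝ᵥ (A⁻¹.mulVec (fun _ => 1)) as x → -∞. In particular, if the method is stiffly accurate in the sense that bᵀ equals the last row of A (i.e. b j = A (s-1) j for all j), then R(x) → 0 as x → -∞. -/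
/-!
For `x ≠ 0` one has `1 - x • A = -x • (A - x⁻¹ • 1)`, and `A - x⁻¹ • 1` tends to the invertible
matrix `A` as `|x| → ∞`. Invertibility is an open condition and inversion is continuous at `A`, so
`1 - x • A` is invertible for large `|x|` and `x • (1 - x • A)⁻¹ = -(A - x⁻¹ • 1)⁻¹` tends to
`-A⁻¹`. If `b` is the `i`-th row of `A`, then `bᵀ A⁻¹` is the `i`-th unit row vector, so
`bᵀ A⁻¹ 𝟙 = 1` and the limit vanishes.
-/

open Filter Matrix

/-- The stability function `R(x) = 1 + x bᵀ (I - xA)⁻¹ 𝟙` of an `s`-stage Runge–Kutta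
method with coefficient matrix `A` and weights `b`. -/
noncomputable def rkStabilityFunction {s : ℕ} (A : Matrix (Fin s) (Fin s) ℝ)
    (b : Fin s → ℝ) (x : ℝ) : ℝ :=
  1 + x * (b ⬝ᵥ ((1 - x • A)⁻¹.mulVec fun _ => 1))

open Bornology Topology

theorem sub_smul_eq_neg_smul_sub_inv_smul {K M : Type*} [DivisionRing K] [AddCommGroup M]
    [Module K M] {x : K} (hx : x ≠ 0) (u v : M) : u - x • v = -x • (v - x⁻¹ • u) := by
  rw [neg_smul, smul_sub, smul_inv_smul₀ hx, neg_sub]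

theorem tendsto_sub_inv_smul_cobounded {K M : Type*} [NormedDivisionRing K] [AddCommGroup M]
    [Module K M] [TopologicalSpace M] [ContinuousSub M] [ContinuousSMul K M] (u v : M) :
    Tendsto (fun x : K => v - x⁻¹ • u) (cobounded K) (𝓝 v) := by
  simpa using (tendsto_inv₀_cobounded (α := K)).smul_const u |>.const_sub v

section Matrix

variable {n : Type*} [Fintype n] [DecidableEq n]

theorem isOpen_setOf_isUnit_matrix {R : Type*} [CommRing R] [TopologicalSpace R]
    [IsTopologicalRing R] [IsOpenUnits R] : IsOpen {A : Matrix n n R | IsUnit A} := by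
  simp only [isUnit_iff_isUnit_det]
  exact (IsOpenUnits.isOpenEmbedding_unitsVal (M := R)).isOpen_range.preimage
    continuous_id.matrix_det

theorem continuousAt_matrix_inv_of_isUnit {K : Type*} [Field K] [TopologicalSpace K]
    [IsTopologicalDivisionRing K] {A : Matrix n n K} (hA : IsUnit A) :
    ContinuousAt Inv.inv A := by
  refine continuousAt_matrix_inv A ?_
  rw [Ring.inverse_eq_inv']
  exact continuousAt_inv₀ (A.isUnit_iff_isUnit_det.1 hA).ne_zero

theorem dotProduct_row_inv_mulVec {R : Type*} [CommRing R] {A : Matrix n n R} (hA : IsUnit A)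
    (i : n) (v : n → R) : A i ⬝ᵥ A⁻¹ *ᵥ v = v i := by
  change (A *ᵥ A⁻¹ *ᵥ v) i = v i
  rw [mulVec_mulVec, mul_nonsing_inv _ (A.isUnit_iff_isUnit_det.1 hA), one_mulVec]

section Field

variable {K : Type*} [Field K] {A : Matrix n n K} {x : K}

theorem isUnit_one_sub_smul_iff_isUnit_sub_inv_smul (hx : x ≠ 0) :
    IsUnit (1 - x • A) ↔ IsUnit (A - x⁻¹ • 1) := by
  rw [sub_smul_eq_neg_smul_sub_inv_smul hx]
  exact isUnit_smul_iff (Units.mk0 (-x) (neg_ne_zero.2 hx)) _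

theorem smul_inv_one_sub_smul (hx : x ≠ 0) (h : IsUnit (A - x⁻¹ • 1)) :
    x • (1 - x • A)⁻¹ = -(A - x⁻¹ • 1)⁻¹ := by
  have hinv : (-x • (A - x⁻¹ • 1))⁻¹ = (-x)⁻¹ • (A - x⁻¹ • 1)⁻¹ :=
    inv_smul' _ (Units.mk0 (-x) (neg_ne_zero.2 hx)) ((isUnit_iff_isUnit_det _).1 h)
  rw [sub_smul_eq_neg_smul_sub_inv_smul hx, hinv, inv_neg, neg_smul, smul_neg,
    smul_inv_smul₀ hx]

end Field

section NormedField

variable {𝕜 : Type*} [NormedField 𝕜] {A : Matrix n n 𝕜}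

theorem eventually_isUnit_sub_inv_smul_one (hA : IsUnit A) :
    ∀ᶠ x : 𝕜 in cobounded 𝕜, IsUnit (A - x⁻¹ • 1) :=
  (tendsto_sub_inv_smul_cobounded 1 A).eventually (isOpen_setOf_isUnit_matrix.mem_nhds hA)

theorem eventually_isUnit_one_sub_smul (hA : IsUnit A) :
    ∀ᶠ x : 𝕜 in cobounded 𝕜, IsUnit (1 - x • A) := by
  filter_upwards [eventually_isUnit_sub_inv_smul_one hA, eventually_ne_cobounded 0] with x h hx
  exact (isUnit_one_sub_smul_iff_isUnit_sub_inv_smul hx).2 h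

theorem tendsto_smul_inv_one_sub_smul (hA : IsUnit A) :
    Tendsto (fun x : 𝕜 => x • (1 - x • A)⁻¹) (cobounded 𝕜) (𝓝 (-A⁻¹)) := by
  have hlim : Tendsto (fun x : 𝕜 => -(A - x⁻¹ • 1)⁻¹) (cobounded 𝕜) (𝓝 (-A⁻¹)) :=
    ((continuousAt_matrix_inv_of_isUnit hA).tendsto.comp
      (tendsto_sub_inv_smul_cobounded 1 A)).neg
  refine hlim.congr' ?_
  filter_upwards [eventually_isUnit_sub_inv_smul_one hA, eventually_ne_cobounded 0] with x h hx
  exact (smul_inv_one_sub_smul hx h).symm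

theorem tendsto_mul_dotProduct_inv_one_sub_smul_mulVec (hA : IsUnit A) (b v : n → 𝕜) :
    Tendsto (fun x : 𝕜 => x * (b ⬝ᵥ (1 - x • A)⁻¹ *ᵥ v)) (cobounded 𝕜)
      (𝓝 (-(b ⬝ᵥ A⁻¹ *ᵥ v))) := by
  have hcont : Continuous fun B : Matrix n n 𝕜 => b ⬝ᵥ B *ᵥ v := by fun_prop
  have hlim := (hcont.tendsto (-A⁻¹)).comp (tendsto_smul_inv_one_sub_smul hA)
  simpa only [Function.comp_def, smul_mulVec, dotProduct_smul, smul_eq_mul, neg_mulVec,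
    dotProduct_neg] using hlim

theorem rkStabilityFunction_atBot_general (hA : IsUnit A) (b : n → 𝕜) :
    (∃ M : ℝ, ∀ x : 𝕜, M ≤ ‖x‖ → IsUnit (1 - x • A)) ∧
    Tendsto (fun x : 𝕜 => 1 + x * (b ⬝ᵥ (1 - x • A)⁻¹ *ᵥ fun _ => 1)) (cobounded 𝕜)
      (𝓝 (1 - b ⬝ᵥ A⁻¹ *ᵥ fun _ => 1)) ∧
    ∀ i, b = A i →
      Tendsto (fun x : 𝕜 => 1 + x * (b ⬝ᵥ (1 - x • A)⁻¹ *ᵥ fun _ => 1)) (cobounded 𝕜)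
        (𝓝 0) := by
  have hlim : Tendsto (fun x : 𝕜 => 1 + x * (b ⬝ᵥ (1 - x • A)⁻¹ *ᵥ fun _ => 1)) (cobounded 𝕜)
      (𝓝 (1 - b ⬝ᵥ A⁻¹ *ᵥ fun _ => 1)) := by
    rw [sub_eq_add_neg]
    exact (tendsto_mul_dotProduct_inv_one_sub_smul_mulVec hA b _).const_add 1
  refine ⟨?_, hlim, fun i hb => ?_⟩
  · simpa using hasBasis_cobounded_norm.eventually_iff.1 (eventually_isUnit_one_sub_smul hA)
  · have hone : b ⬝ᵥ A⁻¹ *ᵥ (fun _ => 1) = 1 := by rw [hb, dotProduct_row_inv_mulVec hA]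
    rwa [hone, sub_self] at hlim

end NormedField

end Matrix

/-- For an `s`-stage Runge–Kutta method with invertible coefficient matrix `A`,
`I - xA` is invertible for all `x` of sufficiently large absolute value, the stability
function tends to `1 - bᵀ A⁻¹ 𝟙` as `x → -∞`, and if the method is stiffly accurate
(`b` equals the last row of `A`) then the stability function tends to `0` as `x → -∞`. -/
theorem rkStabilityFunction_atBot (s : ℕ) (hs : 0 < s)
    (A : Matrix (Fin s) (Fin s) ℝ) (hA : IsUnit A) (b : Fin s → ℝ) :
    (∃ M : ℝ, ∀ x : ℝ, M ≤ |x| → IsUnit ((1 : Matrix (Fin s) (Fin s) ℝ) - x • A)) ∧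
    Tendsto (rkStabilityFunction A b) atBot
      (nhds (1 - b ⬝ᵥ (A⁻¹.mulVec fun _ => 1))) ∧
    ((∀ j : Fin s, b j = A ⟨s - 1, Nat.sub_lt hs Nat.one_pos⟩ j) →
      Tendsto (rkStabilityFunction A b) atBot (nhds 0)) := by
  obtain ⟨hunit, hlim, hstiff⟩ := rkStabilityFunction_atBot_general hA b
  have hle := IsOrderBornology.atBot_le_cobounded (α := ℝ)
  exact ⟨hunit, hlim.mono_left hle, fun hb => (hstiff _ (funext hb)).mono_left hle⟩
end
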